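/- Let R be a commutative ring, n ≥ 2, and M an n×n matrix over R with rows and columns indexed by {1,...,n}. Then det(M) · det(M[{3,...,n},{3,...,n}]) = det(M[{1,3,...,n},{1,3,...,n}]) · det(M[{2,3,...,n},{2,3,...,n}]) − det(M[{1,3,...,n},{2,3,...,n}]) · det(M[{2,3,...,n},{1,3,...,n}]), where by convention the determinant of the empty (0×0) matrix is 1. (This is the k = 2 case of the Dodgson/Muir identity, i.e., Dodgson's identity.) -/

import Mathlib

/-!
STATEMENT 1: Dodgson's identity (the `k = 2` case of the Dodgson/Muir identity).

Rows and columns of `M` are indexed by the paper's `{1, ..., n}`; paper index `t`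
corresponds to the `Fin n` element `t - 1`.  The submatrix `M[{3,...,n}, {3,...,n}]`
is realized on `Fin (n-2)` via `j ↦ j + 2`, and for `a, b ∈ {1, 2}` the submatrix
`M[{a,3,...,n}, {b,3,...,n}]` (rows/columns in increasing order) is realized on
`Unit ⊕ Fin (n-2)`, the `Unit` index being the special (smallest) row `a` / column `b`.
-/

/-- The submatrix `M[{a,3,...,n}, {b,3,...,n}]` for `a, b ∈ {1,2}` (0-indexed: `a, b ∈ Fin 2`),
rows and columns taken in increasing order. -/
def dodgsonSub {R : Type*} [CommRing R] (n : ℕ) (hn : 2 ≤ n) (M : Matrix (Fin n) (Fin n) R)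
    (a b : Fin 2) : Matrix (Unit ⊕ Fin (n - 2)) (Unit ⊕ Fin (n - 2)) R :=
  M.submatrix
    (Sum.elim (fun _ => (⟨(a : ℕ), by have := a.isLt; omega⟩ : Fin n))
      (fun j => (⟨(j : ℕ) + 2, by have := j.isLt; omega⟩ : Fin n)))
    (Sum.elim (fun _ => (⟨(b : ℕ), by have := b.isLt; omega⟩ : Fin n))
      (fun j => (⟨(j : ℕ) + 2, by have := j.isLt; omega⟩ : Fin n)))

/-!
Put `S = det D • A - B * adjugate D * C` for the block matrix `M = [A, B; C, D]`, where `A` is of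
size `k`. Eliminating `C` by a column operation with `adjugate D` gives
`det M * det D ^ k = det S * det D`. One factor `det D` cancels when `det D` is regular, and this
can always be arranged by passing to `D + X` over `R[X]`, whose determinant is monic, and
specializing back at `X = 0`. The resulting identity `det M * det D ^ (k - 1) = det S`, applied to
`D` bordered by the row `a` and the column `b`, also says that `S a b` is that bordered minor.
Dodgson's identity is then the expansion of the `2 × 2` determinant `det S`.
-/

open Matrix

section BlockDeterminant

variable {R k m : Type*} [CommRing R] [Fintype m] [DecidableEq m]

/-- The Schur complement `A - B * D⁻¹ * C` of the lower right block, scaled by `D.det` so that it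
makes sense without inverting `D`. -/
def scaledSchurComplement (A : Matrix k k R) (B : Matrix k m R) (C : Matrix m k R)
    (D : Matrix m m R) : Matrix k k R :=
  D.det • A - B * D.adjugate * C

theorem map_scaledSchurComplement {S : Type*} [CommRing S] (f : R →+* S) (A : Matrix k k R)
    (B : Matrix k m R) (C : Matrix m k R) (D : Matrix m m R) :
    (scaledSchurComplement A B C D).map f =
      scaledSchurComplement (A.map f) (B.map f) (C.map f) (D.map f) := by
  have hdet : (D.map f).det = f D.det := (f.map_det D).symm
  have hadj : (D.map f).adjugate = D.adjugate.map f := (f.map_adjugate D).symm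
  rw [scaledSchurComplement, scaledSchurComplement, hdet, hadj, Matrix.map_sub f (map_sub f),
    Matrix.map_smul' f _ _ (map_mul f), Matrix.map_mul, Matrix.map_mul]

theorem fromBlocks_mul_fromBlocks_adjugate [Fintype k] [DecidableEq k] (A : Matrix k k R)
    (B : Matrix k m R) (C : Matrix m k R) (D : Matrix m m R) :
    fromBlocks A B C D * fromBlocks (D.det • 1) 0 (-(D.adjugate * C)) 1 =
      fromBlocks (scaledSchurComplement A B C D) B 0 D := by
  have hC : C * (D.det • (1 : Matrix k k R)) + D * -(D.adjugate * C) = 0 := by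
    rw [Matrix.mul_neg, ← Matrix.mul_assoc, mul_adjugate, Matrix.smul_mul, Matrix.mul_smul,
      Matrix.one_mul, Matrix.mul_one, add_neg_cancel]
  rw [fromBlocks_multiply, hC]
  simp [scaledSchurComplement, Matrix.mul_assoc, sub_eq_add_neg]

variable [Fintype k] [DecidableEq k]

theorem det_fromBlocks_mul_det_pow_card (A : Matrix k k R) (B : Matrix k m R) (C : Matrix m k R)
    (D : Matrix m m R) :
    (fromBlocks A B C D).det * D.det ^ Fintype.card k =
      (scaledSchurComplement A B C D).det * D.det := by
  simpa [det_smul] using congrArg det (fromBlocks_mul_fromBlocks_adjugate A B C D)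

variable [Nonempty k]

theorem det_fromBlocks_mul_det_pow_of_isRegular (A : Matrix k k R) (B : Matrix k m R)
    (C : Matrix m k R) {D : Matrix m m R} (hD : IsRegular D.det) :
    (fromBlocks A B C D).det * D.det ^ (Fintype.card k - 1) =
      (scaledSchurComplement A B C D).det := by
  apply hD.right
  dsimp only
  rw [mul_assoc, pow_sub_one_mul Fintype.card_ne_zero, det_fromBlocks_mul_det_pow_card]

theorem det_fromBlocks_mul_det_pow (A : Matrix k k R) (B : Matrix k m R) (C : Matrix m k R)
    (D : Matrix m m R) :
    (fromBlocks A B C D).det * D.det ^ (Fintype.card k - 1) =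
      (scaledSchurComplement A B C D).det := by
  let ev : Polynomial R →+* R := Polynomial.evalRingHom 0
  have ev_C : ⇑ev ∘ ⇑Polynomial.C = id := funext fun _ => Polynomial.eval_C
  -- `charmatrix (-D)` is `X + D`.
  have ev_charmatrix : (charmatrix (-D)).map ev = D := by
    ext i j
    simp [ev, charmatrix_apply, diagonal_apply, apply_ite]
  have generic := congrArg ev <| det_fromBlocks_mul_det_pow_of_isRegular (A.map Polynomial.C)
    (B.map Polynomial.C) (C.map Polynomial.C) (charpoly_monic (-D)).isRegular
  simpa only [map_mul, map_pow, RingHom.map_det, RingHom.mapMatrix_apply, fromBlocks_map,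
    map_scaledSchurComplement, Matrix.map_map, ev_C, Matrix.map_id,
    ev_charmatrix] using generic

end BlockDeterminant

section BorderedMinors

variable {R k m : Type*}

/-- The lower right block of `M` bordered by the single row `a` and the single column `b` of the
other block: the matrix `M[{a} ∪ m, {b} ∪ m]`, the `Unit` index being the border. -/
def borderedSubmatrix (M : Matrix (k ⊕ m) (k ⊕ m) R) (a b : k) :
    Matrix (Unit ⊕ m) (Unit ⊕ m) R :=
  M.submatrix (Sum.map (fun _ => a) id) (Sum.map (fun _ => b) id)

variable [CommRing R] [Fintype m] [DecidableEq m]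

theorem det_borderedSubmatrix (M : Matrix (k ⊕ m) (k ⊕ m) R) (a b : k) :
    (borderedSubmatrix M a b).det =
      scaledSchurComplement M.toBlocks₁₁ M.toBlocks₁₂ M.toBlocks₂₁ M.toBlocks₂₂ a b := by
  let N := borderedSubmatrix M a b
  have h := det_fromBlocks_mul_det_pow N.toBlocks₁₁ N.toBlocks₁₂ N.toBlocks₂₁ N.toBlocks₂₂
  rw [fromBlocks_toBlocks, Fintype.card_unit, Nat.sub_self, pow_zero, mul_one] at h
  exact h.trans (det_unique _)

/-- The Dodgson/Muir identity, also known as Sylvester's determinant identity. -/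
theorem dodgson_identity_general [Fintype k] [DecidableEq k] [Nonempty k]
    (M : Matrix (k ⊕ m) (k ⊕ m) R) :
    M.det * M.toBlocks₂₂.det ^ (Fintype.card k - 1) =
      (of fun a b => (borderedSubmatrix M a b).det).det := by
  simp only [det_borderedSubmatrix]
  rw [← fromBlocks_toBlocks M]
  exact det_fromBlocks_mul_det_pow _ _ _ _

end BorderedMinors

section FirstTwoIndices

variable {n : ℕ}

/-- The splitting of the indices `{1, ..., n}` into `{1, 2}` and `{3, ..., n}`, in increasing
order on each part. -/
def finTwoSumEquiv (hn : 2 ≤ n) : Fin 2 ⊕ Fin (n - 2) ≃ Fin n :=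
  finSumFinEquiv.trans (finCongr (Nat.add_sub_of_le hn))

theorem finTwoSumEquiv_inl (hn : 2 ≤ n) (a : Fin 2) :
    finTwoSumEquiv hn (Sum.inl a) = ⟨a, a.isLt.trans_le hn⟩ :=
  rfl

theorem finTwoSumEquiv_inr (hn : 2 ≤ n) (j : Fin (n - 2)) :
    finTwoSumEquiv hn (Sum.inr j) = ⟨j + 2, Nat.add_lt_of_lt_sub j.isLt⟩ :=
  Fin.ext (Nat.add_comm 2 j)

theorem borderedSubmatrix_submatrix_finTwoSumEquiv {R : Type*} [CommRing R] (hn : 2 ≤ n)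
    (M : Matrix (Fin n) (Fin n) R) (a b : Fin 2) :
    borderedSubmatrix (M.submatrix (finTwoSumEquiv hn) (finTwoSumEquiv hn)) a b =
      dodgsonSub n hn M a b := by
  ext (i | i) (j | j) <;>
    simp [borderedSubmatrix, dodgsonSub, finTwoSumEquiv_inl, finTwoSumEquiv_inr]

theorem toBlocks₂₂_submatrix_finTwoSumEquiv {R : Type*} (hn : 2 ≤ n)
    (M : Matrix (Fin n) (Fin n) R) :
    (M.submatrix (finTwoSumEquiv hn) (finTwoSumEquiv hn)).toBlocks₂₂ =
      M.submatrix (fun j : Fin (n - 2) => ⟨j + 2, Nat.add_lt_of_lt_sub j.isLt⟩)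
        (fun j : Fin (n - 2) => ⟨j + 2, Nat.add_lt_of_lt_sub j.isLt⟩) := by
  ext i j
  simp [toBlocks₂₂, finTwoSumEquiv_inr]

end FirstTwoIndices

theorem dodgson_identity {R : Type*} [CommRing R] (n : ℕ) (hn : 2 ≤ n)
    (M : Matrix (Fin n) (Fin n) R) :
    M.det *
      (M.submatrix
        (fun j : Fin (n - 2) => (⟨(j : ℕ) + 2, by have := j.isLt; omega⟩ : Fin n))
        (fun j : Fin (n - 2) => (⟨(j : ℕ) + 2, by have := j.isLt; omega⟩ : Fin n))).det =
    (dodgsonSub n hn M 0 0).det * (dodgsonSub n hn M 1 1).det -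
      (dodgsonSub n hn M 0 1).det * (dodgsonSub n hn M 1 0).det := by
  have h := dodgson_identity_general (M.submatrix (finTwoSumEquiv hn) (finTwoSumEquiv hn))
  simpa [det_fin_two, borderedSubmatrix_submatrix_finTwoSumEquiv,
    toBlocks₂₂_submatrix_finTwoSumEquiv] using h
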